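/- For every integer μ ≥ 1 and every p ∈ (0,1], the right-boundary Müller–Wang kernel Kp1 satisfies the moment conditions ∫_{-p}^{1} Kp1(r) dr = 1 and ∫_{-p}^{1} r·Kp1(r) dr = 0. -/

import Mathlib

open MeasureTheory Set

/-!
Put `s = p + 1`. In the variable `p + r` the bracket of the kernel is the affine function
`2 * ((p - 1) * μ + p) * (p + r) - μ * s * (p - 1)`, so the moments of the kernel about `-p` are
linear combinations of the Beta integrals of `(p + r) ^ k * (1 - r) ^ μ` over `[-p, 1]`.
Multiplication by `C(μ) = (2 * μ + 1)! / μ! ^ 2` turns the integral for `k = μ` into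
`s ^ (2 * μ + 1)`; those for `k = μ - 1` and `k = μ + 1` differ from it by the factors
`(2 * μ + 1) / (μ * s)` and `s / 2`. Hence the moments of order `0` and `1` about `-p` are `1`
and `p`.
-/

section BetaIntegral

open Nat

theorem integral_pow_mul_one_sub_pow (m n : ℕ) :
    ∫ x : ℝ in 0..1, x ^ m * (1 - x) ^ n = (m ! * n ! / (m + n + 1)! : ℝ) := by
  have beta_eq : Complex.betaIntegral (m + 1) (n + 1) = m ! * n ! / (m + n + 1)! := by
    have re_pos (k : ℕ) : 0 < (k + 1 : ℂ).re := mod_cast k.succ_pos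
    rw [Complex.betaIntegral_eq_Gamma_mul_div _ _ (re_pos m) (re_pos n),
      Complex.Gamma_nat_eq_factorial, Complex.Gamma_nat_eq_factorial,
      show (m + 1 + (n + 1) : ℂ) = (m + n + 1 : ℕ) + 1 by push_cast; ring,
      Complex.Gamma_nat_eq_factorial]
  simp only [Complex.betaIntegral, add_sub_cancel_right, Complex.cpow_natCast] at beta_eq
  apply Complex.ofReal_injective
  rw [← intervalIntegral.integral_ofReal]
  push_cast
  exact beta_eq

theorem integral_sub_pow_mul_sub_pow (a b : ℝ) (m n : ℕ) :
    ∫ x in a..b, (x - a) ^ m * (b - x) ^ n =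
      (b - a) ^ (m + n + 1) * (m ! * n ! / (m + n + 1)!) := by
  calc ∫ x in a..b, (x - a) ^ m * (b - x) ^ n
      = (b - a) * ∫ t in 0..1, (a + (b - a) * t - a) ^ m * (b - (a + (b - a) * t)) ^ n := by
        simpa using (intervalIntegral.smul_integral_comp_add_mul (a := 0) (b := 1)
          (fun x ↦ (x - a) ^ m * (b - x) ^ n) (b - a) a).symm
    _ = (b - a) * ∫ t in 0..1, (b - a) ^ (m + n) * (t ^ m * (1 - t) ^ n) := by
        congr 2 with t
        rw [show a + (b - a) * t - a = (b - a) * t by ring,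
          show b - (a + (b - a) * t) = (b - a) * (1 - t) by ring,
          mul_pow, mul_pow]
        ring
    _ = (b - a) ^ (m + n + 1) * (m ! * n ! / (m + n + 1)!) := by
        rw [intervalIntegral.integral_const_mul, integral_pow_mul_one_sub_pow]
        ring

end BetaIntegral

/-- The normalizing constant `C(μ)` of the Müller–Wang kernel of order `μ`. The truncated
subtraction is harmless for `μ ≥ 1`, the only orders for which the kernel is considered. -/
noncomputable def mullerWangConst (μ : ℕ) : ℝ :=
  2 * (2 * (μ : ℝ) + 1) * (Nat.choose (2 * μ - 1) μ : ℝ)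

/-- The right-boundary Müller–Wang kernel `Kp1` of order `μ`, extended by zero outside its support
`[-p, 1]`. The negative power is a real power, as its exponent is not a natural number. -/
noncomputable def mullerWangRightKernel (μ : ℕ) (p r : ℝ) : ℝ :=
  if r ∈ Icc (-p) (1 : ℝ) then
    mullerWangConst μ * (p + 1) ^ (-(2 * (μ : ℝ) + 2)) * (p + r) ^ (μ - 1) * (1 - r) ^ μ *
      (2 * r * ((p - 1) * μ + p) + μ * (p - 1) ^ 2 + 2 * p ^ 2)
  else 0

section Normalization

open Nat

variable {μ : ℕ}

theorem mullerWangConst_eq_factorial (hμ : μ ≠ 0) :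
    mullerWangConst μ = (2 * μ + 1)! / (μ ! : ℝ) ^ 2 := by
  obtain ⟨m, rfl⟩ := Nat.exists_eq_succ_of_ne_zero hμ
  rw [mullerWangConst, Nat.cast_choose ℝ (by omega),
    show 2 * m.succ - 1 - m.succ = m by omega, show 2 * m.succ - 1 = 2 * m + 1 by omega,
    show 2 * m.succ + 1 = 2 * m + 1 + 1 + 1 by omega]
  simp only [Nat.succ_eq_add_one, Nat.factorial_succ (2 * m + 1 + 1),
    Nat.factorial_succ (2 * m + 1), Nat.factorial_succ m]
  push_cast
  field_simp
  ring

theorem mullerWangConst_mul_integral (hμ : μ ≠ 0) (p : ℝ) (k : ℕ) :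
    mullerWangConst μ * ∫ r in (-p)..1, (p + r) ^ k * (1 - r) ^ μ =
      (p + 1) ^ (k + μ + 1) * ((2 * μ + 1)! * k ! / (μ ! * (k + μ + 1)!)) := by
  have beta_eq := integral_sub_pow_mul_sub_pow (-p) 1 k μ
  simp only [sub_neg_eq_add, add_comm _ p] at beta_eq
  rw [mullerWangConst_eq_factorial hμ, beta_eq]
  field_simp

theorem mullerWangConst_mul_integral_pred (hμ : μ ≠ 0) (p : ℝ) :
    mullerWangConst μ * ∫ r in (-p)..1, (p + r) ^ (μ - 1) * (1 - r) ^ μ =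
      (2 * μ + 1) / μ * (p + 1) ^ (2 * μ) := by
  rw [mullerWangConst_mul_integral hμ, show μ - 1 + μ + 1 = 2 * μ by omega,
    ← Nat.mul_factorial_pred hμ, Nat.factorial_succ]
  push_cast
  field_simp

theorem mullerWangConst_mul_integral_self (hμ : μ ≠ 0) (p : ℝ) :
    mullerWangConst μ * ∫ r in (-p)..1, (p + r) ^ μ * (1 - r) ^ μ = (p + 1) ^ (2 * μ + 1) := by
  rw [mullerWangConst_mul_integral hμ, ← two_mul]
  field_simp

theorem mullerWangConst_mul_integral_succ (hμ : μ ≠ 0) (p : ℝ) :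
    mullerWangConst μ * ∫ r in (-p)..1, (p + r) ^ (μ + 1) * (1 - r) ^ μ =
      (p + 1) ^ (2 * μ + 2) / 2 := by
  rw [mullerWangConst_mul_integral hμ, show μ + 1 + μ + 1 = 2 * μ + 1 + 1 by omega,
    Nat.factorial_succ μ, Nat.factorial_succ (2 * μ + 1)]
  push_cast
  field_simp
  ring

end Normalization

section Moments

variable {μ : ℕ} {p : ℝ}

theorem mullerWangRightKernel_eq_indicator (hp : -1 ≤ p) :
    mullerWangRightKernel μ p = (Icc (-p) 1).indicator fun r ↦
      mullerWangConst μ * ((p + 1) ^ (2 * μ + 2))⁻¹ * ((p + r) ^ (μ - 1) * (1 - r) ^ μ) *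
        (2 * ((p - 1) * μ + p) * (p + r) - μ * (p + 1) * (p - 1)) := by
  have rpow_eq : (p + 1) ^ (-(2 * (μ : ℝ) + 2)) = ((p + 1) ^ (2 * μ + 2))⁻¹ := by
    rw [Real.rpow_neg (by linarith)]
    exact_mod_cast rfl
  ext r
  rw [mullerWangRightKernel, indicator_apply, rpow_eq]
  congr 1
  ring

theorem integrable_mul_mullerWangRightKernel (hp : -1 ≤ p) {g : ℝ → ℝ} (hg : Continuous g) :
    Integrable fun r ↦ g r * mullerWangRightKernel μ p r := by
  simp only [mullerWangRightKernel_eq_indicator hp, ← indicator_mul_right (Icc (-p) 1) g]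
  rw [integrable_indicator_iff measurableSet_Icc]
  exact Continuous.integrableOn_Icc (by fun_prop)

theorem integral_pow_mul_mullerWangRightKernel (hμ : μ ≠ 0) (hp : -1 ≤ p) (j : ℕ) :
    ∫ r, (p + r) ^ j * mullerWangRightKernel μ p r =
      ((p + 1) ^ (2 * μ + 2))⁻¹ *
        (2 * ((p - 1) * μ + p) *
            (mullerWangConst μ * ∫ r in (-p)..1, (p + r) ^ (μ + j) * (1 - r) ^ μ) -
          μ * (p + 1) * (p - 1) *
            (mullerWangConst μ * ∫ r in (-p)..1, (p + r) ^ (μ - 1 + j) * (1 - r) ^ μ)) := by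
  simp only [mullerWangRightKernel_eq_indicator hp,
    ← indicator_mul_right (Icc (-p) 1) fun r ↦ (p + r) ^ j]
  rw [integral_indicator measurableSet_Icc, integral_Icc_eq_integral_Ioc,
    ← intervalIntegral.integral_of_le (by linarith)]
  simp only [← intervalIntegral.integral_const_mul]
  rw [← intervalIntegral.integral_sub (Continuous.intervalIntegrable (by fun_prop) _ _)
    (Continuous.intervalIntegrable (by fun_prop) _ _), ← intervalIntegral.integral_const_mul]
  congr 1 with r
  rw [pow_add, pow_add, ← pow_sub_one_mul hμ (p + r)]
  ring

theorem integral_mullerWangRightKernel (hμ : μ ≠ 0) (hp : -1 < p) :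
    ∫ r, mullerWangRightKernel μ p r = 1 := by
  have hs : p + 1 ≠ 0 := by linarith
  have moment := integral_pow_mul_mullerWangRightKernel hμ hp.le 0
  simp only [pow_zero, one_mul, add_zero] at moment
  rw [moment, mullerWangConst_mul_integral_self hμ, mullerWangConst_mul_integral_pred hμ]
  field_simp
  ring

theorem integral_add_mul_mullerWangRightKernel (hμ : μ ≠ 0) (hp : -1 < p) :
    ∫ r, (p + r) * mullerWangRightKernel μ p r = p := by
  have hs : p + 1 ≠ 0 := by linarith
  have moment := integral_pow_mul_mullerWangRightKernel hμ hp.le 1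
  simp only [pow_one, Nat.sub_one_add_one hμ] at moment
  rw [moment, mullerWangConst_mul_integral_succ hμ, mullerWangConst_mul_integral_self hμ]
  field_simp
  ring

theorem integral_id_mul_mullerWangRightKernel (hμ : μ ≠ 0) (hp : -1 < p) :
    ∫ r, r * mullerWangRightKernel μ p r = 0 := by
  calc ∫ r, r * mullerWangRightKernel μ p r
      = ∫ r, ((p + r) * mullerWangRightKernel μ p r - p * mullerWangRightKernel μ p r) := by
        congr 1 with r
        ring
    _ = (∫ r, (p + r) * mullerWangRightKernel μ p r) - p * ∫ r, mullerWangRightKernel μ p r := by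
        rw [integral_sub (integrable_mul_mullerWangRightKernel hp.le (by fun_prop))
          (integrable_mul_mullerWangRightKernel hp.le continuous_const), integral_const_mul]
    _ = 0 := by
        rw [integral_add_mul_mullerWangRightKernel hμ hp, integral_mullerWangRightKernel hμ hp]
        ring

end Moments

theorem muller_wang_right_boundary_kernel_moments_general
    {μ : ℕ} (hμ : μ ≠ 0) {p : ℝ} (hp : -1 < p) :
    (∫ r, mullerWangRightKernel μ p r) = 1 ∧ (∫ r, r * mullerWangRightKernel μ p r) = 0 :=
  ⟨integral_mullerWangRightKernel hμ hp, integral_id_mul_mullerWangRightKernel hμ hp⟩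

/-- For every integer μ ≥ 1 and p ∈ (0,1], the right-boundary
Müller–Wang kernel
`Kp1(r) = C(μ)·(p+1)^{-(2μ+2)}·(p+r)^{μ-1}·(1-r)^μ·[2r((p-1)μ + p) + μ(p-1)² + 2p²]`
on `[-p,1]` (zero outside), with `C(μ) = 2(2μ+1)·choose(2μ-1, μ)`, satisfies
`∫ Kp1 = 1` and `∫ r·Kp1(r) dr = 0`. -/
theorem muller_wang_right_boundary_kernel_moments
    (μ : ℕ) (hμ : 1 ≤ μ) (p : ℝ) (hp : p ∈ Set.Ioc (0 : ℝ) 1) (C : ℝ)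
    (hC : C = 2 * (2 * (μ : ℝ) + 1) * (Nat.choose (2 * μ - 1) μ : ℝ))
    (K : ℝ → ℝ)
    (hK : ∀ r : ℝ, K r =
      if r ∈ Set.Icc (-p) (1 : ℝ) then
        C * (p + 1) ^ (-(2 * (μ : ℝ) + 2)) * (p + r) ^ (μ - 1) * (1 - r) ^ μ *
          (2 * r * ((p - 1) * μ + p) + μ * (p - 1) ^ 2 + 2 * p ^ 2)
      else 0) :
    (∫ r : ℝ, K r) = 1 ∧ (∫ r : ℝ, r * K r) = 0 := by
  obtain rfl : K = mullerWangRightKernel μ p := funext fun r ↦ by rw [hK, hC]; rfl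
  exact muller_wang_right_boundary_kernel_moments_general (by omega) (by linarith [hp.1])
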